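/- Let X be a finite set of alternatives with |X| = m ≥ 3 and let N(n) = {1,…,n} with n ≥ 2 be the set of states of nature. A choice function f on L^{N(n)} satisfies the Weak Dominance Criterion (WDC), satisfies Down Monotonicity, and is Resolute for Pairs, if and only if f is a state-salient decision rule (S-SDR). -/

import Mathlib

/-!
The substance is the direction from the axioms to a salient state.

Down Monotonicity only speaks of moving one alternative `y` down one place.  Passing from one
profile to another by adjacent transpositions, it yields Maskin monotonicity (`maskin`): a chosen
`x` stays chosen as long as, in every state, every alternative `x` used to beat is still beaten.

Say that a set `S` of states *blocks* `y` with `x` (`Blocks f S x y`) if `y` is never chosen when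
`S` is exactly the set of states ranking `x` above `y`.  Given a pattern of the comparison
of `x` and `y`, raise both to the top two places in all states; by Maskin monotonicity and Resolute
for Pairs, `S` blocks `y` with `x` or `Sᶜ` blocks `x` with `y`.

In a profile whose top three places are always taken by `x, y, z`, WDC leaves only these three
as possible choices; if two of them are blocked, the third is chosen. As in Arrow's theorem, this
shows that blocking composes (`blocks_trans`), hence does not depend on the pair (`blocks_neutral`),
and that the family of blocking sets is closed under intersection.  This family contains
`S` or `Sᶜ` for every `S` and omits `∅`, so it is an ultrafilter on the finite set of states; it is
principal, and the generating state is the salient one.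
-/

/-- A strict ranking on `X`: a reflexive, total, transitive, antisymmetric binary
relation (i.e. a linear order relation) on `X`. -/
abbrev Ranking (X : Type*) := {r : X → X → Prop // IsLinearOrder X r}

/-- A (state-dependent) preference profile: an assignment of a strict ranking to
each of the `n` states of nature. -/
abbrev Profile (X : Type*) (n : ℕ) := Fin n → Ranking X

/-- The rank of `x` at a strict ranking `r`: the number of alternatives `y`
with `y r x` (the top alternative has rank 1, since `r` is reflexive). -/
noncomputable def rk {X : Type*} (r : Ranking X) (x : X) : ℕ :=
  Set.ncard {y | r.1 y x}

/-- Weak Dominance Criterion. -/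
def WDC {X : Type*} {n : ℕ} (f : Profile X n → Set X) : Prop :=
  ∀ x y : X, x ≠ y → ∀ R : Profile X n, (∀ i, (R i).1 x y) → y ∉ f R

/-- Global Independence of Irrelevant Alternatives (on the full domain). -/
def GIIA {X : Type*} {n : ℕ} (f : Profile X n → Set X) : Prop :=
  ∀ R R' : Profile X n, ∀ x y : X, x ≠ y →
    (∀ i, (R i).1 x y ↔ (R' i).1 x y) → x ∈ f R → y ∉ f R → y ∉ f R'

/-- Global Independence of Irrelevant Alternatives restricted to a domain `D`. -/
def GIIAon {X : Type*} {n : ℕ} (D : Set (Profile X n)) (f : Profile X n → Set X) : Prop :=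
  ∀ R ∈ D, ∀ R' ∈ D, ∀ x y : X, x ≠ y →
    (∀ i, (R i).1 x y ↔ (R' i).1 x y) → x ∈ f R → y ∉ f R → y ∉ f R'

/-- State-salient decision rule: some state of nature decides the outcome. -/
def SSDR {X : Type*} {n : ℕ} (f : Profile X n → Set X) : Prop :=
  ∃ i : Fin n, ∀ x y : X, x ≠ y → ∀ R : Profile X n, (R i).1 x y → y ∉ f R

/-- Weak Monotonicity. -/
def WeakMono {X : Type*} {n : ℕ} (f : Profile X n → Set X) : Prop :=
  ∀ R R' : Profile X n, ∀ x : X, x ∈ f R →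
    (∀ y : X, y ≠ x → {i : Fin n | (R i).1 x y} ⊆ {i : Fin n | (R' i).1 x y}) →
    x ∈ f R'

/-- Resolute for Pairs. -/
def ResoluteForPairs {X : Type*} {n : ℕ} (f : Profile X n → Set X) : Prop :=
  ∀ R : Profile X n, ∀ x y : X, x ≠ y →
    (∀ i, (rk (R i) x = 1 ∨ rk (R i) x = 2) ∧ (rk (R i) y = 1 ∨ rk (R i) y = 2)) →
    f R = {x} ∨ f R = {y}

/-- Down Monotonicity. -/
def DownMono {X : Type*} {n : ℕ} (f : Profile X n → Set X) : Prop :=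
  ∀ R R' : Profile X n, ∀ i : Fin n, ∀ x : X, x ∈ f R → ∀ y : X, y ≠ x →
    (∀ j, j ≠ i → R j = R' j) →
    (∀ a b : X, a ≠ y → b ≠ y → ((R i).1 a b ↔ (R' i).1 a b)) →
    rk (R' i) y = rk (R i) y + 1 →
    x ∈ f R'

/-- `x` is a strict Condorcet-winner at the profile `R`. -/
def SCWinner {X : Type*} {n : ℕ} (R : Profile X n) (x : X) : Prop :=
  ∀ y : X, y ≠ x →
    Set.ncard {i : Fin n | (R i).1 y x} < Set.ncard {i : Fin n | (R i).1 x y}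

/-- `x` is a strict Condorcet-loser at the profile `R`. -/
def SCLoser {X : Type*} {n : ℕ} (R : Profile X n) (x : X) : Prop :=
  ∀ y : X, y ≠ x →
    Set.ncard {i : Fin n | (R i).1 x y} < Set.ncard {i : Fin n | (R i).1 y x}

/-- `x` is a weak Condorcet-winner at `R`: it is preferred to every other
alternative in at least `n / 2` states (i.e. `n ≤ 2 * #{i | x Rᵢ y}`). -/
def WCWinner {X : Type*} {n : ℕ} (R : Profile X n) (x : X) : Prop :=
  ∀ y : X, y ≠ x → n ≤ 2 * Set.ncard {i : Fin n | (R i).1 x y}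

/-- Most Probable at the Top, on a domain `D`. -/
def MPT {X : Type*} {n : ℕ} (D : Set (Profile X n)) (f : Profile X n → Set X) : Prop :=
  ∀ R ∈ D, ∀ x y : X, x ≠ y →
    (∀ i, ∀ w : X, w ≠ x → w ≠ y → (R i).1 x w ∧ (R i).1 y w) →
    Set.ncard {i : Fin n | (R i).1 y x} < Set.ncard {i : Fin n | (R i).1 x y} →
    f R = {x}

/-- The Borda score of `x` at the profile `R` (with `m = |X|`). -/
noncomputable def BS {X : Type*} [Fintype X] {n : ℕ} (R : Profile X n) (x : X) : ℕ :=
  ∑ i : Fin n, (Fintype.card X + 1 - rk (R i) x)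

/-- The plurality score of `x` at `R`: the number of states where `x` is ranked first. -/
noncomputable def pluralityScore {X : Type*} {n : ℕ} (R : Profile X n) (x : X) : ℕ :=
  Set.ncard {i : Fin n | rk (R i) x = 1}

/-- `x` is the unique plurality winner at `R`. -/
def UniquePlurality {X : Type*} {n : ℕ} (R : Profile X n) (x : X) : Prop :=
  (∀ z : X, pluralityScore R z ≤ pluralityScore R x) ∧
  (∀ z : X, (∀ w : X, pluralityScore R w ≤ pluralityScore R z) → z = x)

/-! ### Rankings: adjacent swaps, ranks, and rankings with a prescribed top -/

section Rankings

variable {X : Type*}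

theorem Ranking.refl (r : Ranking X) (a : X) : r.1 a a := r.2.refl a

theorem Ranking.trans (r : Ranking X) {a b c : X} (h : r.1 a b) (h' : r.1 b c) : r.1 a c :=
  r.2.trans a b c h h'

theorem Ranking.antisymm (r : Ranking X) {a b : X} (h : r.1 a b) (h' : r.1 b a) : a = b :=
  r.2.antisymm a b h h'

theorem Ranking.total (r : Ranking X) (a b : X) : r.1 a b ∨ r.1 b a := r.2.total a b

/-- For distinct alternatives, `¬ r a b` means that `b` is strictly above `a`. -/
theorem Ranking.not_iff (r : Ranking X) {a b : X} (h : a ≠ b) : ¬ r.1 a b ↔ r.1 b a :=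
  ⟨fun k => (r.total a b).resolve_left k, fun k k' => h (r.antisymm k' k)⟩

/-- The ranking obtained from `r` by exchanging `a` and `b`, where `b` is the immediate successor
of `a`. -/
def Ranking.swap (r : Ranking X) (a b : X) (hab : a ≠ b) (h : r.1 a b)
    (hadj : ∀ c, r.1 a c → r.1 c b → c = a ∨ c = b) : Ranking X :=
  ⟨fun u v => (r.1 u v ∧ ¬ (u = a ∧ v = b)) ∨ (u = b ∧ v = a), by
    have hr := r.refl
    have ht := fun u v w => @Ranking.trans X r u v w
    have ha := fun u v => @Ranking.antisymm X r u v
    have hto := r.total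
    exact
      { refl := by grind
        trans := by
          rintro u v w (⟨h1, h1'⟩ | ⟨rfl, rfl⟩) (⟨h2, h2'⟩ | ⟨h2, h2'⟩)
          · left
            refine ⟨ht _ _ _ h1 h2, ?_⟩
            rintro ⟨rfl, rfl⟩
            rcases hadj v h1 h2 with rfl | rfl
            · exact h2' ⟨rfl, rfl⟩
            · exact h1' ⟨rfl, rfl⟩
          · subst h2 h2'
            by_cases hu : u = v
            · exact .inr ⟨hu, rfl⟩
            · left
              refine ⟨?_, fun k => hab k.2⟩
              by_contra hc
              rcases hadj u ((hto _ _).resolve_right hc) h1 with rfl | rfl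
              · exact h1' ⟨rfl, rfl⟩
              · exact hu rfl
          · by_cases hw : w = v
            · exact .inr ⟨rfl, hw⟩
            · left
              refine ⟨?_, fun k => hab k.1.symm⟩
              by_contra hc
              rcases hadj w h2 ((hto _ _).resolve_left hc) with rfl | rfl
              · exact hw rfl
              · exact h2' ⟨rfl, rfl⟩
          · exact absurd h2 hab
        antisymm := by grind
        total := by grind }⟩

theorem rk_swap [Finite X] (r : Ranking X) (a b : X) (hab : a ≠ b) (h : r.1 a b)
    (hadj : ∀ c, r.1 a c → r.1 c b → c = a ∨ c = b) :
    rk (r.swap a b hab h hadj) a = rk r a + 1 := by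
  have hs : {y | (r.swap a b hab h hadj).1 y a} = insert b {y | r.1 y a} := by
    ext y
    simp only [Ranking.swap, Set.mem_ofPred_eq, Set.mem_insert_iff]
    grind
  unfold rk
  rw [hs, Set.ncard_insert_of_notMem]
  exact fun k => hab (r.antisymm h k)

/-- Two rankings that disagree on some pair disagree on a pair adjacent in the first one. -/
theorem exists_adjacent_inversion [Finite X] (r s : Ranking X) (u v : X) (huv : r.1 u v)
    (huv' : ¬ s.1 u v) :
    ∃ a b, r.1 a b ∧ ¬ s.1 a b ∧ ∀ c, r.1 a c → r.1 c b → c = a ∨ c = b := by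
  induction hk : Set.ncard {c | r.1 u c ∧ r.1 c v} using Nat.strong_induction_on
    generalizing u v with
  | _ k ih =>
    subst hk
    by_cases hadj : ∀ c, r.1 u c → r.1 c v → c = u ∨ c = v
    · exact ⟨u, v, huv, huv', hadj⟩
    · push Not at hadj
      obtain ⟨c, huc, hcv, hcu, hcv'⟩ := hadj
      by_cases hs : s.1 u c
      · refine ih _ ?_ c v hcv (fun k => huv' (s.trans hs k)) rfl
        refine Set.ncard_lt_ncard ⟨fun d hd => ⟨r.trans huc hd.1, hd.2⟩, fun hsub => ?_⟩
          (Set.toFinite _)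
        exact hcu (r.antisymm (hsub (⟨r.refl u, huv⟩ : r.1 u u ∧ r.1 u v)).1 huc)
      · refine ih _ ?_ u c huc hs rfl
        refine Set.ncard_lt_ncard ⟨fun d hd => ⟨hd.1, r.trans hd.2 hcv⟩, fun hsub => ?_⟩
          (Set.toFinite _)
        exact hcv' (r.antisymm hcv (hsub (⟨huv, r.refl v⟩ : r.1 u v ∧ r.1 v v)).2)

theorem rk_pos [Finite X] (r : Ranking X) (a : X) : 0 < rk r a :=
  (Set.ncard_pos (Set.toFinite _)).2 ⟨a, r.refl a⟩

theorem rk_eq_one_iff [Finite X] (r : Ranking X) (a : X) : rk r a = 1 ↔ ∀ b, r.1 a b := by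
  unfold rk
  rw [Set.ncard_eq_one]
  constructor
  · rintro ⟨c, hc⟩ b
    have hac : a = c := by
      have : a ∈ {y | r.1 y a} := r.refl a
      rwa [hc] at this
    rcases r.total a b with h | h
    · exact h
    · have : b ∈ {y | r.1 y a} := h
      rw [hc] at this
      rw [hac, Set.mem_singleton_iff.1 this]
      exact r.refl c
  · intro h
    refine ⟨a, Set.eq_singleton_iff_unique_mem.2 ⟨r.refl a, fun y hy => r.antisymm hy (h y)⟩⟩

theorem rk_lt [Finite X] (r : Ranking X) {a b : X} (hab : a ≠ b) (h : r.1 a b) :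
    rk r a < rk r b :=
  Set.ncard_lt_ncard ⟨fun _ hd => r.trans hd h, fun hsub =>
    hab (r.antisymm h (hsub (show b ∈ {y | r.1 y b} from r.refl b)))⟩ (Set.toFinite _)

open Classical in
/-- Positions in a ranking starting with `x, y, z`; the rest follow in some fixed order. -/
noncomputable def top3Key [Fintype X] (x y z w : X) : ℕ :=
  if w = x then 0 else if w = y then 1 else if w = z then 2 else 3 + (Fintype.equivFin X w : ℕ)

theorem top3Key_injective [Fintype X] (x y z : X) : Function.Injective (top3Key x y z) := by
  intro a b h
  unfold top3Key at h
  have key : ∀ a b : X, (Fintype.equivFin X a : ℕ) = Fintype.equivFin X b → a = b :=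
    fun a b h => (Fintype.equivFin X).injective (Fin.ext h)
  have := key a b
  split_ifs at h <;> first | omega | grind

/-- A ranking starting with `x, y, z`. -/
noncomputable def top3 [Fintype X] (x y z : X) : Ranking X :=
  ⟨fun u v => top3Key x y z u ≤ top3Key x y z v,
    { refl := fun _ => le_rfl
      trans := fun _ _ _ => le_trans
      antisymm := fun _ _ h h' => top3Key_injective x y z (le_antisymm h h')
      total := fun _ _ => le_total _ _ }⟩

theorem top3_spec [Fintype X] {x y z : X} (hxy : x ≠ y) (hxz : x ≠ z) (hyz : y ≠ z) :
    (top3 x y z).1 x y ∧ (top3 x y z).1 y z ∧ (top3 x y z).1 x z ∧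
    ¬ (top3 x y z).1 y x ∧ ¬ (top3 x y z).1 z y ∧ ¬ (top3 x y z).1 z x ∧
    ∀ w, w ≠ x → w ≠ y → w ≠ z →
      (top3 x y z).1 x w ∧ (top3 x y z).1 y w ∧ (top3 x y z).1 z w := by
  simp only [top3, top3Key]
  grind

theorem rk_top3 [Fintype X] {x y : X} (z : X) (hxy : x ≠ y) :
    rk (top3 x y z) x = 1 ∧ rk (top3 x y z) y = 2 := by
  have h1 : {w | (top3 x y z).1 w x} = {x} := by
    ext w
    simp only [top3, top3Key, Set.mem_ofPred_eq, Set.mem_singleton_iff]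
    grind
  have h2 : {w | (top3 x y z).1 w y} = {x, y} := by
    ext w
    simp only [top3, top3Key, Set.mem_ofPred_eq, Set.mem_singleton_iff, Set.mem_insert_iff]
    grind
  unfold rk
  rw [h1, h2]
  exact ⟨Set.ncard_singleton x, Set.ncard_pair hxy⟩

end Rankings

/-! ### Maskin monotonicity and blocking sets of states -/

section Blocking

variable {X : Type*} {n : ℕ}

/-- Maskin monotonicity.  The induction is on the number of inversions between the profiles, over
all states. -/
theorem maskin [Finite X] {f : Profile X n → Set X} (hD : DownMono f) (R R' : Profile X n) (x : X)
    (hx : x ∈ f R) (h : ∀ i y, (R i).1 x y → (R' i).1 x y) : x ∈ f R' := by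
  classical
  induction hk : Set.ncard {p : Fin n × X × X | (R p.1).1 p.2.1 p.2.2 ∧ ¬ (R' p.1).1 p.2.1 p.2.2}
    using Nat.strong_induction_on generalizing R with
  | _ k ih =>
    subst hk
    by_cases hinv : ∃ i u v, (R i).1 u v ∧ ¬ (R' i).1 u v
    · obtain ⟨i, u, v, huv, huv'⟩ := hinv
      obtain ⟨a, b, hab, hab', hadj⟩ := exists_adjacent_inversion (R i) (R' i) u v huv huv'
      have hne : a ≠ b := by
        rintro rfl
        exact hab' ((R' i).refl a)
      -- `x` loses no comparison on the way to `R'`, so the alternative to be lowered is not `x`.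
      have hax : a ≠ x := by
        rintro rfl
        exact hab' (h i b hab)
      have hba : (R' i).1 b a := ((R' i).total a b).resolve_left hab'
      set S := (R i).swap a b hne hab hadj with hS
      have hS' : ∀ u v, S.1 u v ↔ ((R i).1 u v ∧ ¬ (u = a ∧ v = b)) ∨ (u = b ∧ v = a) :=
        fun u v => Iff.rfl
      refine ih _ ?_ (Function.update R i S) ?_ ?_ rfl
      · refine Set.ncard_lt_ncard ⟨?_, fun hsub => ?_⟩ (Set.toFinite _)
        · rintro ⟨j, c, d⟩ ⟨h1, h2⟩
          refine ⟨?_, h2⟩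
          by_cases hj : j = i
          · subst hj
            simp only [Function.update_self] at h1 h2 ⊢
            rcases (hS' _ _).1 h1 with h3 | ⟨rfl, rfl⟩
            · exact h3.1
            · exact absurd hba h2
          · simpa [Function.update_of_ne hj] using h1
        · have := (@hsub (i, a, b) ⟨hab, hab'⟩).1
          simp only [Function.update_self] at this
          rcases (hS' _ _).1 this with h3 | h3
          · exact h3.2 ⟨rfl, rfl⟩
          · exact hne h3.1
      · refine hD R _ i x hx a hax (fun j hj => (Function.update_of_ne hj _ _).symm) ?_ ?_
        · intro c d hc hd
          simp only [Function.update_self, hS']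
          grind
        · simp only [Function.update_self]
          exact rk_swap _ _ _ _ _ _
      · intro j y hj
        by_cases hji : j = i
        · subst hji
          simp only [Function.update_self] at hj
          rcases (hS' _ _).1 hj with h3 | ⟨rfl, rfl⟩
          · exact h _ _ h3.1
          · exact hba
        · rw [Function.update_of_ne hji] at hj
          exact h _ _ hj
    · push Not at hinv
      have : R = R' := by
        funext i
        apply Subtype.ext
        funext u v
        apply propext
        refine ⟨hinv i u v, fun huv => ?_⟩
        rcases (R i).total u v with h1 | h1
        · exact h1
        · rw [(R' i).antisymm huv (hinv i v u h1)]
          exact (R i).refl v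
      exact this ▸ hx

/-- `S` blocks `y` with `x`: `y` is not chosen when `S` is exactly the set of states ranking
`x` above `y`. -/
def Blocks (f : Profile X n → Set X) (S : Set (Fin n)) (x y : X) : Prop :=
  ∀ R : Profile X n, (∀ i, (R i).1 x y ↔ i ∈ S) → y ∉ f R

open Classical in
theorem blocks_or [Fintype X] {f : Profile X n → Set X} (hD : DownMono f)
    (hP : ResoluteForPairs f) {x y : X} (hxy : x ≠ y) (S : Set (Fin n)) :
    Blocks f S x y ∨ Blocks f Sᶜ y x := by
  by_contra! hc
  unfold Blocks at hc
  push Not at hc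
  obtain ⟨⟨R, hR, hy⟩, ⟨R', hR', hx⟩⟩ := hc
  -- `R`, `R'` and `T` all compare `x` and `y` in the same way, and in `T` these two take the top
  -- two places.
  set T : Profile X n := fun i => if i ∈ S then top3 x y x else top3 y x y with hT
  have hTx : ∀ i, i ∈ S → ∀ w, (T i).1 x w := by
    intro i hi w
    simp only [hT, hi, if_true, top3, top3Key]
    grind
  have hTy : ∀ i, i ∉ S → ∀ w, (T i).1 y w := by
    intro i hi w
    simp only [hT, hi, if_false, top3, top3Key]
    grind
  have hTx' : ∀ i, ∀ w, w ≠ y → (T i).1 x w := by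
    intro i w hw
    by_cases hi : i ∈ S
    · exact hTx i hi w
    · simp only [hT, hi, if_false, top3, top3Key]
      grind
  have hTy' : ∀ i, ∀ w, w ≠ x → (T i).1 y w := by
    intro i w hw
    by_cases hi : i ∈ S
    · simp only [hT, hi, if_true, top3, top3Key]
      grind
    · exact hTy i hi w
  have hyT : y ∈ f T := by
    refine maskin hD R T y hy fun i w hw => ?_
    by_cases hwx : w = x
    · subst hwx
      exact hTy i (fun hi => hxy ((R i).antisymm ((hR i).2 hi) hw)) w
    · exact hTy' i w hwx
  have hxT : x ∈ f T := by
    refine maskin hD R' T x hx fun i w hw => ?_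
    by_cases hwy : w = y
    · subst hwy
      refine hTx i ?_ w
      by_contra hi
      exact hxy ((R' i).antisymm hw ((hR' i).2 hi))
    · exact hTx' i w hwy
  have hrk : ∀ i, (rk (T i) x = 1 ∨ rk (T i) x = 2) ∧ (rk (T i) y = 1 ∨ rk (T i) y = 2) := by
    intro i
    by_cases hi : i ∈ S
    · simp only [hT, hi, if_true]
      have := rk_top3 x hxy
      exact ⟨.inl this.1, .inr this.2⟩
    · simp only [hT, hi, if_false]
      have := rk_top3 y hxy.symm
      exact ⟨.inr this.2, .inl this.1⟩
  rcases hP T x y hxy hrk with h | h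
  · rw [h] at hyT
    exact hxy hyT.symm
  · rw [h] at hxT
    exact hxy hxT

/-- If `x` is chosen even once when exactly the states in `S` rank it above `y`, then `S` blocks `y`
with `x`. -/
theorem blocks_of_mem [Fintype X] {f : Profile X n → Set X} (hD : DownMono f)
    (hP : ResoluteForPairs f) {x y : X} (hxy : x ≠ y) (S : Set (Fin n)) (R : Profile X n)
    (hR : ∀ i, (R i).1 x y ↔ i ∈ S) (hx : x ∈ f R) : Blocks f S x y := by
  refine (blocks_or hD hP hxy S).resolve_right fun h => h R (fun i => ?_) hx
  rw [Set.mem_compl_iff, ← hR i, (R i).not_iff hxy]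

/-- If `S` blocks `y` with `x` and `T` blocks `z` with `y`, then `S ∩ T` blocks `z` with `x`.  The
profile used extends the one of the Condorcet paradox: the four rankings of `x, y, z` realize `S`,
`T` and `S ∩ T` as the states ranking `x` above `y`, `y` above `z` and `x` above `z`. -/
theorem blocks_trans [Fintype X] {f : Profile X n → Set X} (hf : ∀ R, (f R).Nonempty)
    (hW : WDC f) (hD : DownMono f) (hP : ResoluteForPairs f) {x y z : X} (hxy : x ≠ y)
    (hxz : x ≠ z) (hyz : y ≠ z) {S T : Set (Fin n)} (hS : Blocks f S x y) (hT : Blocks f T y z) :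
    Blocks f (S ∩ T) x z := by
  classical
  let R : Profile X n := fun i =>
    if i ∈ S then (if i ∈ T then top3 x y z else top3 z x y)
    else (if i ∈ T then top3 y z x else top3 z y x)
  have h1 := top3_spec hxy hxz hyz
  have h2 := top3_spec hxz.symm hyz.symm hxy
  have h3 := top3_spec hyz hxy.symm hxz.symm
  have h4 := top3_spec hyz.symm hxz.symm hxy.symm
  have hRxy : ∀ i, (R i).1 x y ↔ i ∈ S := by
    intro i
    simp only [R]
    split_ifs <;> simp_all
  have hRyz : ∀ i, (R i).1 y z ↔ i ∈ T := by
    intro i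
    simp only [R]
    split_ifs <;> simp_all
  have hRxz : ∀ i, (R i).1 x z ↔ i ∈ S ∩ T := by
    intro i
    simp only [R, Set.mem_inter_iff]
    split_ifs <;> simp_all
  have hRw : ∀ w, w ≠ x → w ≠ y → w ≠ z → ∀ i, (R i).1 x w := by
    intro w hwx hwy hwz i
    simp only [R]
    split_ifs <;> simp_all
  obtain ⟨w, hw⟩ := hf R
  have hwx : w = x := by
    by_contra hwx
    by_cases hwy : w = y
    · exact hS R hRxy (hwy ▸ hw)
    by_cases hwz : w = z
    · exact hT R hRyz (hwz ▸ hw)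
    exact hW x w (Ne.symm hwx) R (hRw w hwx hwy hwz) hw
  exact blocks_of_mem hD hP hxz _ R hRxz (hwx ▸ hw)

theorem blocks_univ {f : Profile X n → Set X} (hW : WDC f) {x y : X} (hxy : x ≠ y) :
    Blocks f Set.univ x y :=
  fun R hR => hW x y hxy R fun i => (hR i).2 trivial

/-- Blocking does not depend on the pair of alternatives. -/
theorem blocks_neutral [Fintype X] (hX : 3 ≤ Fintype.card X) {f : Profile X n → Set X}
    (hf : ∀ R, (f R).Nonempty) (hW : WDC f) (hD : DownMono f) (hP : ResoluteForPairs f)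
    {S : Set (Fin n)} {x y u v : X} (hxy : x ≠ y) (huv : u ≠ v) (h : Blocks f S x y) :
    Blocks f S u v := by
  have right : ∀ {x y z : X}, x ≠ y → x ≠ z → Blocks f S x y → Blocks f S x z := by
    intro x y z hxy hxz h
    by_cases hyz : y = z
    · exact hyz ▸ h
    · simpa using blocks_trans hf hW hD hP hxy hxz hyz h (blocks_univ hW hyz)
  have left : ∀ {x y z : X}, x ≠ y → z ≠ y → Blocks f S x y → Blocks f S z y := by
    intro x y z hxy hzy h
    by_cases hzx : z = x
    · exact hzx ▸ h
    · simpa using blocks_trans hf hW hD hP hzx hzy hxy (blocks_univ hW hzx) h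
  by_cases hvx : v = x
  · subst hvx
    obtain ⟨z, hzv, hzu⟩ : ∃ z, z ≠ v ∧ z ≠ u := by
      obtain ⟨a, b, c, hab, hac, hbc⟩ := Fintype.two_lt_card_iff.1 hX
      by_contra! hall
      have ha := hall a
      have hb := hall b
      have hc := hall c
      by_cases hav : a = v <;> by_cases hbv : b = v <;> grind
    exact right hzu.symm huv (left hzv.symm hzu.symm (right hxy hzv.symm h))
  · exact left (Ne.symm hvx) huv (right hxy (Ne.symm hvx) h)

theorem not_blocks_empty [Fintype X] {f : Profile X n → Set X} (hf : ∀ R, (f R).Nonempty)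
    (hW : WDC f) {x y : X} (hxy : x ≠ y) : ¬ Blocks f ∅ x y := by
  intro h
  have hy : ∀ w, (top3 y x y).1 y w := (rk_eq_one_iff _ _).1 (rk_top3 y hxy.symm).1
  obtain ⟨w, hw⟩ := hf fun _ => top3 y x y
  by_cases hwy : w = y
  · subst hwy
    refine h _ (fun i => ?_) hw
    simpa using ((top3 w x w).not_iff hxy).2 (hy x)
  · exact hW y w (Ne.symm hwy) _ (fun _ => hy w) hw

theorem ssdr_of_conditions [Fintype X] (hX : 3 ≤ Fintype.card X) {f : Profile X n → Set X}
    (hf : ∀ R, (f R).Nonempty) (hW : WDC f) (hD : DownMono f) (hP : ResoluteForPairs f) :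
    SSDR f := by
  classical
  obtain ⟨a, b, c, hab, hac, hbc⟩ := Fintype.two_lt_card_iff.1 hX
  have hinter : ∀ S T, Blocks f S a b → Blocks f T a b → Blocks f (S ∩ T) a b := fun S T hS hT =>
    blocks_neutral hX hf hW hD hP hac hab (blocks_trans hf hW hD hP hab hac hbc hS
      (blocks_neutral hX hf hW hD hP hab hbc hT))
  have hcompl : ∀ S, Blocks f S a b ∨ Blocks f Sᶜ a b := fun S =>
    (blocks_or hD hP hab S).imp_right (blocks_neutral hX hf hW hD hP hab.symm hab)
  have hempty : ¬ Blocks f ∅ a b := not_blocks_empty hf hW hab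
  have hsingle : ∃ i, Blocks f {i} a b := by
    by_contra! hno
    have key : ∀ s : Finset (Fin n), Blocks f {j | j ∉ s} a b := by
      intro s
      induction s using Finset.induction_on with
      | empty => simpa using blocks_univ hW hab
      | insert i s _ ih =>
        have := hinter _ _ ((hcompl {i}).resolve_left (hno i)) ih
        convert this using 1
        ext j
        simp
    exact hempty (by simpa using key Finset.univ)
  obtain ⟨i, hi⟩ := hsingle
  refine ⟨i, fun x y hxy R hR => ?_⟩
  rcases hcompl {j | (R j).1 x y} with h | h
  · exact blocks_neutral hX hf hW hD hP hab hxy h R fun j => Iff.rfl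
  · refine absurd (hinter _ _ h hi) ?_
    have : {j | (R j).1 x y}ᶜ ∩ {i} = (∅ : Set (Fin n)) := by
      ext j
      simp only [Set.mem_inter_iff, Set.mem_compl_iff, Set.mem_ofPred_eq, Set.mem_singleton_iff,
        Set.mem_empty_iff_false, iff_false, not_and]
      rintro h1 rfl
      exact h1 hR
    rwa [this]

/-! ### State-salient rules satisfy the axioms -/

/-- A state-salient rule chooses exactly the top alternative of the salient state. -/
theorem eq_top_of_salient {f : Profile X n → Set X} (hf : ∀ R, (f R).Nonempty) {i : Fin n}
    (h : ∀ x y : X, x ≠ y → ∀ R : Profile X n, (R i).1 x y → y ∉ f R) (R : Profile X n) (x : X)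
    (hx : ∀ y, (R i).1 x y) : f R = {x} := by
  refine Set.eq_singleton_iff_nonempty_unique_mem.2 ⟨hf R, fun y hy => ?_⟩
  by_contra hyx
  exact h x y (Ne.symm hyx) R (hx y) hy

theorem conditions_of_ssdr [Finite X] {f : Profile X n → Set X} (hf : ∀ R, (f R).Nonempty)
    (h : SSDR f) : WDC f ∧ DownMono f ∧ ResoluteForPairs f := by
  obtain ⟨i, h⟩ := h
  refine ⟨fun x y hxy R hR => h x y hxy R (hR i), ?_, ?_⟩
  · intro R R' j x hx y hyx hother hagree hrk
    have htop : ∀ w, (R i).1 x w := by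
      intro w
      by_contra hw
      have hwx := ((R i).total x w).resolve_left hw
      refine h w x ?_ R hwx hx
      rintro rfl
      exact hw hwx
    have htop' : ∀ w, (R' i).1 x w := by
      by_cases hij : i = j
      · subst hij
        have hne : ∀ w, w ≠ y → (R' i).1 x w := fun w hw =>
          (hagree x w (Ne.symm hyx) hw).1 (htop w)
        intro w
        by_cases hw : w = y
        · subst hw
          by_contra hc
          have hwx := ((R' i).total x w).resolve_left hc
          -- `w` would be on top of `R' i`, forcing its rank at `R i` to be `0`.
          have h1 : rk (R' i) w = 1 := (rk_eq_one_iff _ _).2 fun v => by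
            by_cases hv : v = w
            · exact hv ▸ (R' i).refl w
            · exact (R' i).trans hwx (hne v hv)
          have := rk_pos (R i) w
          omega
        · exact hne w hw
      · exact hother i hij ▸ htop
    rw [eq_top_of_salient hf h R' x htop']
    rfl
  · intro R x y hxy hrk
    obtain ⟨hx, hy⟩ := hrk i
    rcases (R i).total x y with hle | hle
    · have := rk_lt (R i) hxy hle
      exact .inl (eq_top_of_salient hf h R x ((rk_eq_one_iff _ _).1 (by omega)))
    · have := rk_lt (R i) hxy.symm hle
      exact .inr (eq_top_of_salient hf h R y ((rk_eq_one_iff _ _).1 (by omega)))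

end Blocking

/-- WDC, Down Monotonicity and Resolute for Pairs characterize S-SDRs. -/
theorem stmt_7 {X : Type*} [Fintype X] {n : ℕ} (hX : 3 ≤ Fintype.card X) (hn : 2 ≤ n)
    (f : Profile X n → Set X) (hf : ∀ R, (f R).Nonempty) :
    (WDC f ∧ DownMono f ∧ ResoluteForPairs f) ↔ SSDR f := by
  exact ⟨fun ⟨hW, hD, hP⟩ => ssdr_of_conditions hX hf hW hD hP, conditions_of_ssdr hf⟩
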